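/- Let 1 ≤ p < ∞, let (S, 𝒮) be a measurable space, X, X_1, X_2, … i.i.d. S-valued random variables, and let f̄ : ℝ^d × S → ℝ be jointly measurable with ‖f̄(·, x)‖_{L_p(ℝ^d)} < ∞ for all x ∈ S and ‖E f̄(·, X)‖_{L_p(ℝ^d)} < ∞. Define the empirical process v̄_n(t) := n^{−1/2} Σ_{i=1}^n (f̄(t, X_i) − E f̄(t, X)), t ∈ ℝ^d, an L_p(ℝ^d)-valued random variable. Let K ∈ L_1(ℝ^d) with ∫ K = 1, and let 0 < a ≤ b < ∞. Assume: (ii) for every ε > 0, lim_{δ → 0} limsup_{n → ∞} Pr{ sup_{|u| ≤ δ} ‖ v̄_n(· − u) − v̄_n(·) ‖_{L_p(ℝ^d)} > ε } = 0; and (iii) the sequence ‖v̄_n‖_{L_p(ℝ^d)}, n ∈ ℕ, is stochastically bounded (tight in ℝ). Then for any sequence h_n → 0, sup_{a ≤ λ ≤ b} ‖ v̄_n * K_{λ h_n} − v̄_n ‖_{L_p(ℝ^d)} → 0 in probability as n → ∞. -/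

import Mathlib

open MeasureTheory Filter
open scoped ENNReal Topology
noncomputable section

/-- The empirical process `v̄_n(t) = n^{−1/2} Σ_{i=1}^n (f̄(t, X_i) − E f̄(t, X))`, realized on
the sample space `Fin n → S` carrying the product measure `P^n`. -/
def vbar {S : Type*} [MeasurableSpace S] (d : ℕ) (P : Measure S)
    (fbar : EuclideanSpace ℝ (Fin d) → S → ℝ) (n : ℕ) (ω : Fin n → S)
    (t : EuclideanSpace ℝ (Fin d)) : ℝ :=
  (Real.sqrt n)⁻¹ * ∑ i : Fin n, (fbar t (ω i) - ∫ x, fbar t x ∂P)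

/-- The `L_p(ℝ^d)` norm `(∫ |w(t)|^p dt)^{1/p}`. -/
def Np (d : ℕ) (p : ℝ) (w : EuclideanSpace ℝ (Fin d) → ℝ) : ℝ :=
  (∫ t : EuclideanSpace ℝ (Fin d), |w t| ^ p) ^ (1 / p)

/-!
Since `∫ K = 1`, the substitution `u ↦ h^{1/d} u` gives
`v * K_h − v = ∫ K(u) (v(· − h^{1/d} u) − v) du`, so by Minkowski's integral inequality
`‖v * K_h − v‖_p ≤ ‖K‖_1 sup_{|u| ≤ δ} ‖v(· − u) − v‖_p + 2 ‖v‖_p ∫_{|u| > R} |K|`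
for every `h ≤ (δ / R)^d`. This bound is uniform in `h` and deterministic: `R` is chosen from the
tightness of `‖v‖_p`, then `δ` from the equicontinuity, and the union bound over the two exceptional
events concludes.
-/

section MixedNorm

variable {α β : Type*} [MeasurableSpace α] [MeasurableSpace β] {μ : Measure α} {ν : Measure β}
  {p : ℝ≥0∞}

lemma eLpNorm_eLpNorm_swap [SFinite μ] [SFinite ν] {G : α → β → ℝ≥0∞}
    (hG : AEMeasurable (Function.uncurry G) (μ.prod ν)) (hp₀ : p ≠ 0) (hp : p ≠ ∞) :
    eLpNorm (fun x => eLpNorm (G x) p ν) p μ = eLpNorm (fun y => eLpNorm (G · y) p μ) p ν := by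
  have hp' : p.toReal ≠ 0 := (ENNReal.toReal_pos hp₀ hp).ne'
  simp only [eLpNorm_eq_lintegral_rpow_enorm_toReal hp₀ hp, enorm_eq_self, ← ENNReal.rpow_mul,
    one_div_mul_cancel hp', ENNReal.rpow_one]
  rw [lintegral_lintegral_swap (hG.pow_const _)]

lemma lintegral_le_eLpNorm_mul_measure_univ (hp : 1 ≤ p) {g : β → ℝ≥0∞} (hg : AEMeasurable g ν) :
    ∫⁻ y, g y ∂ν ≤ eLpNorm g p ν * ν Set.univ ^ (1 - 1 / p.toReal) := by
  simpa [eLpNorm_one_eq_lintegral_enorm] using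
    eLpNorm_le_eLpNorm_mul_rpow_measure_univ hp hg.aestronglyMeasurable

lemma eLpNorm_lintegral_le [SFinite μ] [IsFiniteMeasure ν] {G : α → β → ℝ≥0∞}
    (hG : AEMeasurable (Function.uncurry G) (μ.prod ν)) (hp₁ : 1 ≤ p) (hp : p ≠ ∞) {C : ℝ≥0∞}
    (hC : ∀ᵐ y ∂ν, eLpNorm (G · y) p μ ≤ C) :
    eLpNorm (fun x => ∫⁻ y, G x y ∂ν) p μ ≤ C * ν Set.univ := by
  have hp₀ : p ≠ 0 := (zero_lt_one.trans_le hp₁).ne'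
  have hp₁' : 1 ≤ p.toReal := by simpa using ENNReal.toReal_mono hp hp₁
  have hexp : 0 ≤ 1 - 1 / p.toReal := by
    rw [sub_nonneg, div_le_one (by linarith)]
    exact hp₁'
  have hmeas : AEMeasurable (fun x => eLpNorm (G x) p ν) μ := by
    simp only [eLpNorm_eq_lintegral_rpow_enorm_toReal hp₀ hp, enorm_eq_self]
    exact (hG.pow_const _).lintegral_prod_right'.pow_const _
  set A := ν Set.univ ^ (1 - 1 / p.toReal)
  calc eLpNorm (fun x => ∫⁻ y, G x y ∂ν) p μ
      ≤ A * eLpNorm (fun x => eLpNorm (G x) p ν) p μ := by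
        refine eLpNorm_le_mul_eLpNorm_of_ae_le_mul'' p hmeas.aestronglyMeasurable ?_
        filter_upwards [hG.aestronglyMeasurable.prodMk_left] with x hx
        simpa [A, mul_comm] using lintegral_le_eLpNorm_mul_measure_univ hp₁ hx.aemeasurable
    _ ≤ A * (C * ν Set.univ ^ (1 / p.toReal)) := by
        rw [eLpNorm_eLpNorm_swap hG hp₀ hp]
        gcongr
        simpa using eLpNorm_le_of_ae_enorm_bound (f := fun y => eLpNorm (G · y) p μ) hC
    _ = C * ν Set.univ := by
        rw [mul_left_comm, ← ENNReal.rpow_add_of_nonneg _ _ hexp (by positivity), sub_add_cancel,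
          ENNReal.rpow_one]

end MixedNorm

section ApproximateIdentity

lemma enorm_integral_smul_sub_le {α F : Type*} [MeasurableSpace α] {μ : Measure α}
    [NormedAddCommGroup F] [NormedSpace ℝ F] [CompleteSpace F]
    {K : α → ℝ} (hK : Integrable K μ) (hK_one : ∫ a, K a ∂μ = 1) {f : α → F}
    (hf : AEStronglyMeasurable f μ) (x : F) :
    ‖(∫ a, K a • f a ∂μ) - x‖ₑ ≤ ∫⁻ a, ‖f a - x‖ₑ ∂(μ.withDensity fun a => ‖K a‖ₑ) := by
  have hKx : Integrable (fun a => K a • x) μ := hK.smul_const x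
  have hlint : ∫⁻ a, ‖f a - x‖ₑ ∂(μ.withDensity fun a => ‖K a‖ₑ)
      = ∫⁻ a, ‖K a • f a - K a • x‖ₑ ∂μ := by
    rw [lintegral_withDensity_eq_lintegral_mul₀ (g := fun a => ‖f a - x‖ₑ)
      hK.aestronglyMeasurable.enorm (hf.sub aestronglyMeasurable_const).enorm]
    simp only [Pi.mul_apply, ← smul_sub, enorm_smul]
  rw [hlint]
  by_cases hKf : Integrable (fun a => K a • f a) μ
  · have hdiff : (∫ a, K a • f a ∂μ) - x = ∫ a, (K a • f a - K a • x) ∂μ := by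
      rw [integral_sub hKf hKx, integral_smul_const, hK_one, one_smul]
    rw [hdiff]
    exact enorm_integral_le_lintegral_enorm _
  · -- The integral on the left is the junk value `0`, but the right-hand side is infinite.
    have hinfty : ∫⁻ a, ‖K a • f a - K a • x‖ₑ ∂μ = ∞ := by
      by_contra hne
      have hdiff : Integrable (fun a => K a • f a - K a • x) μ :=
        ⟨(hK.aestronglyMeasurable.smul hf).sub hKx.aestronglyMeasurable, lt_top_iff_ne_top.2 hne⟩
      exact hKf (by simpa [Pi.add_def] using hdiff.add hKx)
    exact hinfty ▸ le_top

section Translation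

variable {E F : Type*} [AddGroup E] [MeasurableSpace E] [MeasurableAdd E] [NormedAddCommGroup F]
  {ν : Measure E} [ν.IsAddRightInvariant] {p : ℝ≥0∞}

lemma memLp_translate_sub {v : E → F} (hv : MemLp v p ν) (u : E) :
    MemLp (fun t => v (t - u) - v t) p ν :=
  (hv.comp_measurePreserving (measurePreserving_sub_right ν u)).sub hv

lemma eLpNorm_translate_sub_le (hp₁ : 1 ≤ p) {v : E → F} (hv : AEStronglyMeasurable v ν) (u : E) :
    eLpNorm (fun t => v (t - u) - v t) p ν ≤ 2 * eLpNorm v p ν := by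
  have hu := measurePreserving_sub_right ν u
  have hvu : AEStronglyMeasurable (fun t => v (t - u)) ν := hv.comp_measurePreserving hu
  calc eLpNorm (fun t => v (t - u) - v t) p ν
      ≤ eLpNorm (fun t => v (t - u)) p ν + eLpNorm v p ν := eLpNorm_sub_le hvu hv hp₁
    _ = 2 * eLpNorm v p ν := by
        rw [two_mul]
        congr 1
        exact eLpNorm_comp_measurePreserving hv hu

end Translation

variable {E F : Type*} [NormedAddCommGroup E] [NormedSpace ℝ E] [MeasurableSpace E] [BorelSpace E]
  [SecondCountableTopology E] [NormedAddCommGroup F] {ν : Measure E} [SFinite ν]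
  [ν.IsAddRightInvariant]

lemma quasiMeasurePreserving_sub_smul (μ : Measure E) [SFinite μ] (c : ℝ) :
    Measure.QuasiMeasurePreserving (fun q : E × E => q.1 - c • q.2) (ν.prod μ) ν :=
  QuasiMeasurePreserving.prod_of_left (by fun_prop) (ae_of_all _ fun u =>
    (measurePreserving_sub_right ν (c • u)).quasiMeasurePreserving)

lemma aestronglyMeasurable_integral_smul_comp_sub_smul [NormedSpace ℝ F] {K : E → ℝ}
    (hK : AEStronglyMeasurable K ν) {v : E → F} (hv : AEStronglyMeasurable v ν) (c : ℝ) :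
    AEStronglyMeasurable (fun t => ∫ u, K u • v (t - c • u) ∂ν) ν :=
  (hK.comp_snd.smul
    (hv.comp_quasiMeasurePreserving (quasiMeasurePreserving_sub_smul ν c))).integral_prod_right'

lemma eLpNorm_integral_smul_sub_le [NormedSpace ℝ F] [CompleteSpace F] {p : ℝ≥0∞} (hp₁ : 1 ≤ p)
    (hp : p ≠ ∞) {K : E → ℝ} (hK : Integrable K ν) (hK_one : ∫ u, K u ∂ν = 1) {v : E → F}
    (hv : AEStronglyMeasurable v ν) {s : Set E} (hs : MeasurableSet s) {c : ℝ} {C : ℝ≥0∞}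
    (hC : ∀ u ∈ s, eLpNorm (fun t => v (t - c • u) - v t) p ν ≤ C) :
    eLpNorm (fun t => (∫ u, K u • v (t - c • u) ∂ν) - v t) p ν ≤
      C * (ν.withDensity fun u => ‖K u‖ₑ) s +
        2 * eLpNorm v p ν * (ν.withDensity fun u => ‖K u‖ₑ) sᶜ := by
  set κ := ν.withDensity fun u => ‖K u‖ₑ
  have : IsFiniteMeasure κ := isFiniteMeasure_withDensity hK.2.ne
  set G : E → E → ℝ≥0∞ := fun t u => ‖v (t - c • u) - v t‖ₑ
  have hG (μ : Measure E) [SFinite μ] : AEMeasurable (Function.uncurry G) (ν.prod μ) :=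
    ((hv.comp_quasiMeasurePreserving (quasiMeasurePreserving_sub_smul μ c)).sub hv.comp_fst).enorm
  have hpoint : ∀ᵐ t ∂ν, ‖(∫ u, K u • v (t - c • u) ∂ν) - v t‖ₑ ≤ ∫⁻ u, G t u ∂κ := by
    filter_upwards [(hv.comp_quasiMeasurePreserving
      (quasiMeasurePreserving_sub_smul ν c)).prodMk_left] with t ht
    exact enorm_integral_smul_sub_le hK hK_one ht (v t)
  calc eLpNorm (fun t => (∫ u, K u • v (t - c • u) ∂ν) - v t) p ν
      ≤ eLpNorm (fun t => (∫⁻ u in s, G t u ∂κ) + ∫⁻ u in sᶜ, G t u ∂κ) p ν :=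
        eLpNorm_mono_enorm_ae (by simpa only [lintegral_add_compl _ hs, enorm_eq_self] using hpoint)
    _ ≤ eLpNorm (fun t => ∫⁻ u in s, G t u ∂κ) p ν + eLpNorm (fun t => ∫⁻ u in sᶜ, G t u ∂κ) p ν :=
        eLpNorm_add_le (hG (κ.restrict s)).lintegral_prod_right'.aestronglyMeasurable
          (hG (κ.restrict sᶜ)).lintegral_prod_right'.aestronglyMeasurable hp₁
    _ ≤ C * κ s + 2 * eLpNorm v p ν * κ sᶜ := by
        gcongr
        · simpa using eLpNorm_lintegral_le (hG (κ.restrict s)) hp₁ hp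
            (ae_restrict_of_forall_mem hs fun u hu => by simpa [G] using hC u hu)
        · simpa using eLpNorm_lintegral_le (hG (κ.restrict sᶜ)) hp₁ hp
            (ae_of_all _ fun u => by simpa [G] using eLpNorm_translate_sub_le hp₁ hv (c • u))

end ApproximateIdentity

section Np

variable {d : ℕ} {p : ℝ} {w : EuclideanSpace ℝ (Fin d) → ℝ}

lemma Np_eq_toReal_eLpNorm (hp : 0 < p) (hw : AEStronglyMeasurable w) :
    Np d p w = (eLpNorm w (ENNReal.ofReal p) volume).toReal := by
  rw [toReal_eLpNorm hw, lpNorm_eq_integral_norm_rpow_toReal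
    (ENNReal.ofReal_pos.2 hp).ne' ENNReal.ofReal_ne_top hw, ENNReal.toReal_ofReal hp.le, ← one_div]
  rfl

lemma ofReal_Np (hp : 0 < p) (hw : MemLp w (ENNReal.ofReal p)) :
    ENNReal.ofReal (Np d p w) = eLpNorm w (ENNReal.ofReal p) volume := by
  rw [Np_eq_toReal_eLpNorm hp hw.1, ENNReal.ofReal_toReal hw.2.ne]

lemma Np_nonneg : 0 ≤ Np d p w := by
  unfold Np
  positivity

lemma memLp_ofReal_iff (hp : 0 < p) (hw : AEStronglyMeasurable w) :
    MemLp w (ENNReal.ofReal p) ↔ ∫⁻ t, ENNReal.ofReal (|w t| ^ p) ≠ ⊤ := by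
  rw [MemLp, and_iff_right hw, eLpNorm_lt_top_iff_lintegral_rpow_enorm_lt_top
    (ENNReal.ofReal_pos.2 hp).ne' ENNReal.ofReal_ne_top, ENNReal.toReal_ofReal hp.le,
    lt_top_iff_ne_top]
  simp only [← ENNReal.ofReal_rpow_of_nonneg (abs_nonneg _) hp.le, Real.enorm_eq_ofReal_abs]

end Np

lemma memLp_vbar {S : Type*} [MeasurableSpace S] {d : ℕ} {p : ℝ} (hp : 0 < p) {P : Measure S}
    [SFinite P] {fbar : EuclideanSpace ℝ (Fin d) → S → ℝ}
    (hmeas : Measurable (Function.uncurry fbar))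
    (hLp : ∀ x, (∫⁻ t, ENNReal.ofReal (|fbar t x| ^ p)) ≠ ⊤)
    (hLpE : (∫⁻ t, ENNReal.ofReal (|∫ x, fbar t x ∂P| ^ p)) ≠ ⊤) (n : ℕ) (ω : Fin n → S) :
    MemLp (vbar d P fbar n ω) (ENNReal.ofReal p) := by
  have hsection (x : S) : MemLp (fbar · x) (ENNReal.ofReal p) :=
    (memLp_ofReal_iff hp hmeas.of_uncurry_right.aestronglyMeasurable).2 (hLp x)
  have hmean : MemLp (fun t => ∫ x, fbar t x ∂P) (ENNReal.ofReal p) :=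
    (memLp_ofReal_iff hp hmeas.stronglyMeasurable.integral_prod_right.aestronglyMeasurable).2 hLpE
  exact (memLp_finsetSum _ fun i _ => (hsection (ω i)).sub hmean).const_mul _

/-- The `L_p` modulus of continuity of `v` at scale `δ`, i.e. `sup_{|u| ≤ δ} ‖v(· − u) − v‖_p`.
The supremum is finite, hence meaningful, whenever `v ∈ L_p`. -/
def translationModulus (d : ℕ) (p δ : ℝ) (v : EuclideanSpace ℝ (Fin d) → ℝ) : ℝ :=
  ⨆ u : Metric.closedBall (0 : EuclideanSpace ℝ (Fin d)) δ,
    Np d p (fun t => v (t - (u : EuclideanSpace ℝ (Fin d))) - v t)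

/-- The smoothed function `v * K_h`, where `K_h(u) = h^{-1} K(u / h^{1/d})`: the parameter `h` is
the volume scale of the kernel, not its length scale. -/
def kernelSmooth (d : ℕ) (K : EuclideanSpace ℝ (Fin d) → ℝ) (h : ℝ)
    (v : EuclideanSpace ℝ (Fin d) → ℝ) (t : EuclideanSpace ℝ (Fin d)) : ℝ :=
  ∫ u, v (t - u) * (h⁻¹ * K ((h ^ ((1 : ℝ) / d))⁻¹ • u))

section Smoothing

variable {d : ℕ} {p : ℝ} {K v : EuclideanSpace ℝ (Fin d) → ℝ}

lemma kernelSmooth_eq_integral_smul (hd : 1 ≤ d) {h : ℝ} (hh : 0 < h) :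
    kernelSmooth d K h v = fun t => ∫ u, K u • v (t - h ^ ((1 : ℝ) / d) • u) := by
  funext t
  set c := h ^ ((1 : ℝ) / d) with hc
  have hc₀ : 0 < c := Real.rpow_pos_of_pos hh _
  have hcd : c ^ d = h := by
    rw [hc, one_div, Real.rpow_inv_natCast_pow hh.le (by lia)]
  calc kernelSmooth d K h v t
      = h⁻¹ * ∫ u, K (c⁻¹ • u) • v (t - c • c⁻¹ • u) := by
        rw [kernelSmooth, ← integral_const_mul]
        refine integral_congr_ae (ae_of_all _ fun u => ?_)
        simp only [smul_inv_smul₀ hc₀.ne', smul_eq_mul, ← hc]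
        ring
    _ = ∫ u, K u • v (t - c • u) := by
        rw [Measure.integral_comp_inv_smul_of_nonneg volume (fun u => K u • v (t - c • u)) hc₀.le,
          finrank_euclideanSpace_fin, hcd, smul_eq_mul, inv_mul_cancel_left₀ hh.ne']

lemma Np_translate_sub_le_translationModulus (hp : 1 ≤ p) (hv : MemLp v (ENNReal.ofReal p)) {δ : ℝ}
    {u : EuclideanSpace ℝ (Fin d)} (hu : u ∈ Metric.closedBall 0 δ) :
    Np d p (fun t => v (t - u) - v t) ≤ translationModulus d p δ v := by
  have hp₀ : 0 < p := by linarith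
  refine le_ciSup (f := fun u : Metric.closedBall (0 : EuclideanSpace ℝ (Fin d)) δ =>
    Np d p (fun t => v (t - u) - v t)) ⟨2 * Np d p v, ?_⟩ ⟨u, hu⟩
  rintro _ ⟨u, rfl⟩
  rw [← ENNReal.ofReal_le_ofReal_iff (mul_nonneg zero_le_two Np_nonneg),
    ENNReal.ofReal_mul zero_le_two, ofReal_Np hp₀ (memLp_translate_sub hv _), ofReal_Np hp₀ hv,
    ENNReal.ofReal_ofNat]
  exact eLpNorm_translate_sub_le (by simpa using hp) hv.1 _

lemma Np_kernelSmooth_sub_le (hd : 1 ≤ d) (hp : 1 ≤ p) (hK : Integrable K)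
    (hK_one : ∫ u, K u = 1) (hv : MemLp v (ENNReal.ofReal p)) {h δ R : ℝ} (hh : 0 < h)
    (hδ : h ^ ((1 : ℝ) / d) * R ≤ δ) :
    Np d p (fun t => kernelSmooth d K h v t - v t) ≤
      translationModulus d p δ v *
          (volume.withDensity fun u => ‖K u‖ₑ).real (Metric.closedBall 0 R) +
        2 * Np d p v * (volume.withDensity fun u => ‖K u‖ₑ).real (Metric.closedBall 0 R)ᶜ := by
  have hp₀ : 0 < p := by linarith
  set κ := volume.withDensity fun u => ‖K u‖ₑ
  have : IsFiniteMeasure κ := isFiniteMeasure_withDensity hK.2.ne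
  set c := h ^ ((1 : ℝ) / d)
  have hc : 0 ≤ c := by positivity
  have hnear (u) (hu : u ∈ Metric.closedBall 0 R) :
      eLpNorm (fun t => v (t - c • u) - v t) (ENNReal.ofReal p) volume ≤
        ENNReal.ofReal (translationModulus d p δ v) := by
    rw [← ofReal_Np hp₀ (memLp_translate_sub hv _)]
    refine ENNReal.ofReal_le_ofReal (Np_translate_sub_le_translationModulus hp hv ?_)
    rw [mem_closedBall_zero_iff] at hu ⊢
    rw [norm_smul, Real.norm_of_nonneg hc]
    exact (mul_le_mul_of_nonneg_left hu hc).trans hδ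
  have hmeas : AEStronglyMeasurable (kernelSmooth d K h v) := by
    rw [kernelSmooth_eq_integral_smul hd hh]
    exact aestronglyMeasurable_integral_smul_comp_sub_smul hK.1 hv.1 c
  have hmod : 0 ≤ translationModulus d p δ v := Real.iSup_nonneg fun _ => Np_nonneg
  have hNp : 0 ≤ Np d p v := Np_nonneg
  rw [Np_eq_toReal_eLpNorm (w := fun t => kernelSmooth d K h v t - v t) hp₀ (hmeas.sub hv.1),
    kernelSmooth_eq_integral_smul hd hh]
  refine ENNReal.toReal_le_of_le_ofReal (by positivity) ?_
  refine (eLpNorm_integral_smul_sub_le (by simpa using hp) ENNReal.ofReal_ne_top hK hK_one hv.1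
    Metric.isClosed_closedBall.measurableSet hnear).trans_eq ?_
  rw [ENNReal.ofReal_add (by positivity) (by positivity), ENNReal.ofReal_mul hmod,
    ENNReal.ofReal_mul (by positivity), ENNReal.ofReal_mul zero_le_two, ofReal_Np hp₀ hv,
    ENNReal.ofReal_ofNat, ofReal_measureReal, ofReal_measureReal]

lemma exists_pos_measureReal_compl_closedBall_le {E : Type*} [NormedAddCommGroup E]
    [CompleteSpace E] [SecondCountableTopology E] [MeasurableSpace E] [BorelSpace E]
    (κ : Measure E) [IsFiniteMeasure κ] {τ : ℝ} (hτ : 0 < τ) :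
    ∃ R > 0, κ.real (Metric.closedBall 0 R)ᶜ ≤ τ := by
  have htail : Tendsto (fun R : ℝ => κ (Metric.closedBall 0 R)ᶜ) atTop (𝓝 0) := by
    simpa using tendsto_measure_compl_closedBall_of_isTightMeasureSet
      (isTightMeasureSet_singleton (μ := κ)) 0
  obtain ⟨R, hR, hR₀⟩ := ((htail.eventually (gt_mem_nhds (ENNReal.ofReal_pos.2 hτ))).and
    (eventually_gt_atTop 0)).exists
  exact ⟨R, hR₀, ENNReal.toReal_le_of_le_ofReal hτ.le hR.le⟩

lemma exists_Np_kernelSmooth_sub_le (hd : 1 ≤ d) (hp : 1 ≤ p) (hK : Integrable K)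
    (hK_one : ∫ u, K u = 1) {ε : ℝ} (hε : 0 < ε) (B : ℝ) :
    ∃ ε₁ > 0, ∀ δ > 0, ∃ h₀ > 0, ∀ v, MemLp v (ENNReal.ofReal p) → Np d p v ≤ B →
      translationModulus d p δ v ≤ ε₁ → ∀ h, 0 < h → h ≤ h₀ →
        Np d p (fun t => kernelSmooth d K h v t - v t) ≤ ε := by
  set κ := volume.withDensity fun u => ‖K u‖ₑ
  have : IsFiniteMeasure κ := isFiniteMeasure_withDensity hK.2.ne
  obtain ⟨R, hR₀, hR⟩ :=
    exists_pos_measureReal_compl_closedBall_le κ (τ := ε / (4 * (|B| + 1))) (by positivity)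
  refine ⟨ε / (2 * (κ.real Set.univ + 1)), by positivity, fun δ hδ =>
    ⟨(δ / R) ^ d, by positivity, fun v hv hB hmod h hh hh₀ => ?_⟩⟩
  have hscale : h ^ ((1 : ℝ) / d) * R ≤ δ := by
    rw [← le_div_iff₀ hR₀, one_div, ← Real.pow_rpow_inv_natCast (by positivity : 0 ≤ δ / R)
      (by lia : d ≠ 0)]
    gcongr
  have hball : κ.real (Metric.closedBall 0 R) ≤ κ.real Set.univ + 1 :=
    (measureReal_mono (Set.subset_univ _)).trans (by linarith)
  have hB' : Np d p v ≤ |B| + 1 := by linarith [le_abs_self B]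
  calc Np d p (fun t => kernelSmooth d K h v t - v t)
      ≤ translationModulus d p δ v * κ.real (Metric.closedBall 0 R) +
          2 * Np d p v * κ.real (Metric.closedBall 0 R)ᶜ :=
        Np_kernelSmooth_sub_le hd hp hK hK_one hv hh hscale
    _ ≤ ε / (2 * (κ.real Set.univ + 1)) * (κ.real Set.univ + 1) +
          2 * (|B| + 1) * (ε / (4 * (|B| + 1))) := by gcongr
    _ = ε := by
        have hM : κ.real Set.univ + 1 ≠ 0 := by positivity
        field_simp
        ring

end Smoothing

theorem stmt19_general {d : ℕ} (hd : 1 ≤ d) {p : ℝ} (hp : 1 ≤ p) {Ω : ℕ → Type*}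
    [∀ n, MeasurableSpace (Ω n)] (ℙ : ∀ n, Measure (Ω n))
    (v : ∀ n, Ω n → EuclideanSpace ℝ (Fin d) → ℝ) (hv : ∀ n ω, MemLp (v n ω) (ENNReal.ofReal p))
    {K : EuclideanSpace ℝ (Fin d) → ℝ} (hK : Integrable K) (hK_one : ∫ u, K u = 1)
    (hequi : ∀ ε : ℝ, 0 < ε → ∀ η : ℝ, 0 < η → ∃ δ : ℝ, 0 < δ ∧
      limsup (fun n => ℙ n {ω | ε < translationModulus d p δ (v n ω)}) atTop ≤ ENNReal.ofReal η)
    (htight : ∀ η : ℝ, 0 < η → ∃ B : ℝ, ∀ n, ℙ n {ω | B < Np d p (v n ω)} ≤ ENNReal.ofReal η)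
    {ι : Type*} (h : ℕ → ι → ℝ) (hpos : ∀ n i, 0 < h n i) {H : ℕ → ℝ}
    (hle : ∀ n i, h n i ≤ H n) (hH : Tendsto H atTop (𝓝 0)) {ε : ℝ} (hε : 0 < ε) :
    Tendsto (fun n => ℙ n {ω | ε <
      ⨆ i, Np d p (fun t => kernelSmooth d K (h n i) (v n ω) t - v n ω t)}) atTop (𝓝 0) := by
  rw [ENNReal.tendsto_nhds_zero]
  intro θ hθ
  obtain ⟨η, hη, hηθ⟩ := ENNReal.exists_nnreal_pos_mul_lt (ENNReal.ofNat_ne_top (n := 3)) hθ.ne'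
  obtain ⟨B, hB⟩ := htight η hη
  obtain ⟨ε₁, hε₁, hscale⟩ := exists_Np_kernelSmooth_sub_le hd hp hK hK_one hε B
  obtain ⟨δ, hδ, hlimsup⟩ := hequi ε₁ hε₁ η hη
  obtain ⟨h₀, hh₀, hsmooth⟩ := hscale δ hδ
  have hmod := eventually_lt_of_limsup_lt (hlimsup.trans_lt
    ((ENNReal.ofReal_lt_ofReal_iff (by positivity)).2 (by linarith : (η : ℝ) < 2 * η)))
  filter_upwards [hmod, hH.eventually (gt_mem_nhds hh₀)] with n hmod_n hH_n
  have hsub : {ω | ε < ⨆ i, Np d p (fun t => kernelSmooth d K (h n i) (v n ω) t - v n ω t)} ⊆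
      {ω | ε₁ < translationModulus d p δ (v n ω)} ∪ {ω | B < Np d p (v n ω)} := by
    intro ω hω
    by_contra hgood
    obtain ⟨hmod_ω, hbound_ω⟩ := not_or.1 hgood
    exact hω.not_ge (Real.iSup_le (fun i => hsmooth _ (hv n ω) (not_lt.1 hbound_ω)
      (not_lt.1 hmod_ω) _ (hpos n i) ((hle n i).trans hH_n.le)) hε.le)
  calc _ ≤ ℙ n {ω | ε₁ < translationModulus d p δ (v n ω)} + ℙ n {ω | B < Np d p (v n ω)} :=
        (measure_mono hsub).trans (measure_union_le _ _)
    _ ≤ ENNReal.ofReal (2 * η) + ENNReal.ofReal η := add_le_add hmod_n.le (hB n)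
    _ = η * 3 := by
        rw [← ENNReal.ofReal_add (by positivity) (by positivity),
          show 2 * (η : ℝ) + η = η * 3 by ring, ENNReal.ofReal_mul (by positivity),
          ENNReal.ofReal_coe_nnreal, ENNReal.ofReal_ofNat]
    _ ≤ θ := hηθ.le

/-- (Proposition 1.) Let `1 ≤ p < ∞`, `f̄ : ℝ^d × S → ℝ` jointly measurable with
`‖f̄(·,x)‖_p < ∞` for all `x` and `‖E f̄(·,X)‖_p < ∞`, let `K ∈ L_1(ℝ^d)` with `∫ K = 1` and
`0 < a ≤ b < ∞`. Assume (ii) `lim_{δ→0} limsup_n Pr{sup_{|u|≤δ} ‖v̄_n(·−u) − v̄_n‖_p > ε} = 0`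
for every `ε > 0`, and (iii) the sequence `‖v̄_n‖_p` is stochastically bounded. Then for any
`h_n → 0` (with `h_n > 0`), `sup_{a ≤ λ ≤ b} ‖v̄_n * K_{λ h_n} − v̄_n‖_p → 0` in probability,
where `K_h(t) = h^{−1} K(t/h^{1/d})`. -/
theorem stmt19 (d : ℕ) (hd : 1 ≤ d) (p : ℝ) (hp : 1 ≤ p)
    (S : Type) [MeasurableSpace S] (P : Measure S) [IsProbabilityMeasure P]
    (fbar : EuclideanSpace ℝ (Fin d) → S → ℝ)
    (hmeas : Measurable (fun q : (EuclideanSpace ℝ (Fin d)) × S => fbar q.1 q.2))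
    (hInt : ∀ t, Integrable (fun x => fbar t x) P)
    (hLp : ∀ x : S, (∫⁻ t : EuclideanSpace ℝ (Fin d), ENNReal.ofReal (|fbar t x| ^ p)) ≠ ⊤)
    (hLpE : (∫⁻ t : EuclideanSpace ℝ (Fin d), ENNReal.ofReal (|∫ x, fbar t x ∂P| ^ p)) ≠ ⊤)
    (K : EuclideanSpace ℝ (Fin d) → ℝ) (hK_int : Integrable K)
    (hK_one : (∫ u : EuclideanSpace ℝ (Fin d), K u) = 1)
    (a b : ℝ) (ha : 0 < a) (hab : a ≤ b)
    -- (ii) local L_p-equicontinuity in probability of the empirical process: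
    (hii : ∀ ε : ℝ, 0 < ε → ∀ η : ℝ, 0 < η → ∃ δ : ℝ, 0 < δ ∧
      Filter.limsup (fun n : ℕ =>
          (Measure.pi fun _ : Fin n => P)
            {ω : Fin n → S | ε <
              ⨆ u : Metric.closedBall (0 : EuclideanSpace ℝ (Fin d)) δ,
                Np d p (fun t => vbar d P fbar n ω (t - (u : EuclideanSpace ℝ (Fin d))) -
                  vbar d P fbar n ω t)}) atTop ≤ ENNReal.ofReal η)
    -- (iii) stochastic boundedness of `‖v̄_n‖_p`:
    (hiii : ∀ η : ℝ, 0 < η → ∃ Mb : ℝ, ∀ n : ℕ,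
      (Measure.pi fun _ : Fin n => P)
        {ω : Fin n → S | Mb < Np d p (vbar d P fbar n ω)} ≤ ENNReal.ofReal η)
    (hn : ℕ → ℝ) (hnpos : ∀ n, 0 < hn n) (hn0 : Tendsto hn atTop (nhds 0)) :
    ∀ ε : ℝ, 0 < ε →
      Tendsto (fun n : ℕ =>
          (Measure.pi fun _ : Fin n => P)
            {ω : Fin n → S | ε <
              ⨆ l : Set.Icc a b,
                Np d p (fun t =>
                  (∫ u, vbar d P fbar n ω (t - u) *
                    (((l : ℝ) * hn n)⁻¹ *
                      K ((((l : ℝ) * hn n) ^ ((1 : ℝ) / d))⁻¹ • u))) -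
                  vbar d P fbar n ω t)}) atTop (nhds 0) := by
  intro ε hε
  exact stmt19_general hd hp (fun _ => .pi fun _ => P) (vbar d P fbar)
    (memLp_vbar (by linarith) hmeas hLp hLpE) hK_int hK_one hii hiii
    (fun n (l : Set.Icc a b) => l * hn n)
    (fun n l => mul_pos (ha.trans_le l.2.1) (hnpos n))
    (fun n l => mul_le_mul_of_nonneg_right l.2.2 (hnpos n).le)
    (by simpa using hn0.const_mul b) hε
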